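/- Let S be an inverse monoid with semilattice of idempotents E and group of units G, and let θ be the natural connection. Then (g⁻¹eg)θ = g⁻¹(eθ)g for every idempotent e ∈ E and every unit g ∈ G. Moreover, if S is factorizable and θ is injective, then an idempotent e is central in S if and only if eθ is a normal subgroup of G. -/

import Mathlib

/-- An inverse monoid: a monoid in which every element `a` has an inverse `a⁻¹`
satisfying `a * a⁻¹ * a = a` and `a⁻¹ * a * a⁻¹ = a⁻¹`, and this inverse is unique. -/
class InverseMonoid (S : Type*) extends Monoid S, Inv S where
  mul_inv_mul : ∀ a : S, a * a⁻¹ * a = a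
  inv_mul_inv : ∀ a : S, a⁻¹ * a * a⁻¹ = a⁻¹
  inv_unique : ∀ a b : S, a * b * a = a → b * a * b = b → b = a⁻¹

/-- An inverse monoid with a (two-sided absorbing) zero element. -/
class InverseMonoidWithZero (S : Type*) extends InverseMonoid S, Zero S where
  zero_mul : ∀ a : S, 0 * a = 0
  mul_zero : ∀ a : S, a * 0 = 0

/-- The natural partial order on an inverse monoid: `a ≤ b` iff `a = e * b`
for some idempotent `e`. -/
def NatLe {S : Type*} [Monoid S] (a b : S) : Prop :=
  ∃ e : S, IsIdempotentElem e ∧ a = e * b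

/-- The filter `e↑ = {s | e ≤ s}` generated by `e`. -/
def upfilter {S : Type*} [Monoid S] (e : S) : Set S := {s | NatLe e s}

/-- `c` is central in (a subset) `T`: it belongs to `T` and commutes with all elements of `T`. -/
def CentralIn {S : Type*} [Mul S] (T : Set S) (c : S) : Prop :=
  c ∈ T ∧ ∀ s ∈ T, c * s = s * c

/-- A monoid is factorizable if every element is a product of an idempotent and a unit. -/
def Factorizable (S : Type*) [Monoid S] : Prop :=
  ∀ s : S, ∃ e g : S, IsIdempotentElem e ∧ IsUnit g ∧ s = e * g

/-- The natural connection `θ`: for an (idempotent) `e`, the subgroup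
`eθ = {g ∈ G : e * g = e}` of the group of units. -/
def natconn {S : Type*} [Monoid S] (e : S) : Subgroup Sˣ where
  carrier := {g : Sˣ | e * (g : S) = e}
  one_mem' := by simp
  mul_mem' := by
    intro a b ha hb
    simp only [Set.mem_setOf_eq, Units.val_mul] at *
    rw [← mul_assoc, ha, hb]
  inv_mem' := by
    intro a ha
    simp only [Set.mem_setOf_eq] at *
    nth_rewrite 1 [← ha]
    rw [mul_assoc, ← Units.val_mul, mul_inv_cancel, Units.val_one, mul_one]

/-- The natural connection is a dual isomorphism from the idempotents onto a
sublattice of the lattice of subgroups of the group of units: it is injective on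
idempotents, order-reversing in both directions, and its image is closed under
joins and meets of subgroups. -/
def NatconnDualIso (S : Type*) [Monoid S] : Prop :=
  (∀ e f : S, IsIdempotentElem e → IsIdempotentElem f → natconn e = natconn f → e = f) ∧
  (∀ e f : S, IsIdempotentElem e → IsIdempotentElem f →
    (NatLe e f ↔ natconn f ≤ natconn e)) ∧
  (∀ e f : S, IsIdempotentElem e → IsIdempotentElem f →
    (∃ h : S, IsIdempotentElem h ∧ natconn h = natconn e ⊔ natconn f) ∧
    (∃ h : S, IsIdempotentElem h ∧ natconn h = natconn e ⊓ natconn f))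

/-- `j` is the join (least upper bound) of `e` and `f` with respect to the natural order. -/
def IsNatJoin {S : Type*} [Monoid S] (e f j : S) : Prop :=
  NatLe e j ∧ NatLe f j ∧ ∀ x : S, NatLe e x → NatLe f x → NatLe j x

/-- `F_{e,f} = f · e↑`. -/
def Fef {S : Type*} [Monoid S] (e f : S) : Set S := (f * ·) '' upfilter e

/-- `UF_{e,f}`: the group of units of the monoid `F_{e,f}` (whose identity is `f`). -/
def UFef {S : Type*} [Monoid S] (e f : S) : Set S :=
  {x ∈ Fef e f | ∃ y ∈ Fef e f, x * y = f ∧ y * x = f}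

/-- The centre of a subset `T`. -/
def ZIn {S : Type*} [Mul S] (T : Set S) : Set S := {x ∈ T | ∀ y ∈ T, x * y = y * x}

/-- Two subsets are isomorphic as semigroups (with the induced multiplication). -/
def SubIso {S : Type*} [Mul S] (A B : Set S) : Prop :=
  ∃ φ : S → S, Set.BijOn φ A B ∧ ∀ a ∈ A, ∀ b ∈ A, φ (a * b) = φ a * φ b

/-- A subcentral idempotent series between `0` and `a`. -/
def IsSubcentralSeriesBetween {S : Type*} [Monoid S] [Zero S] (n : ℕ) (c : ℕ → S) (a : S) :
    Prop :=
  c 0 = 0 ∧ c n = a ∧ (∀ i ≤ n, IsIdempotentElem (c i)) ∧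
    ∀ i < n, CentralIn (upfilter (c i)) (c (i + 1))

/-- A subcentral idempotent series of `S` (between `0` and `1`). -/
def IsSubcentralSeries {S : Type*} [Monoid S] [Zero S] (n : ℕ) (c : ℕ → S) : Prop :=
  IsSubcentralSeriesBetween n c 1

/-- A central idempotent series of `S`. -/
def IsCentralSeries {S : Type*} [Monoid S] [Zero S] (n : ℕ) (c : ℕ → S) : Prop :=
  c 0 = 0 ∧ c n = 1 ∧ (∀ i ≤ n, IsIdempotentElem (c i)) ∧
    (∀ i < n, NatLe (c i) (c (i + 1))) ∧
    ∀ i < n, CentralIn Set.univ (c (i + 1))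

/-- A subcentral idempotent: one occurring in some subcentral idempotent series of `S`. -/
def IsSubcentralIdem {S : Type*} [Monoid S] [Zero S] (e : S) : Prop :=
  ∃ (n : ℕ) (c : ℕ → S), IsSubcentralSeries n c ∧ ∃ i ≤ n, c i = e

/-- A `G`-nilpotent series: a chain of central idempotents from `0` to `1` with
`F_{eᵢ,eᵢ₊₁} ⊆ Z(F_{0,eᵢ₊₁})`. -/
def GNilpotentSeries {S : Type*} [Monoid S] [Zero S] (n : ℕ) (c : ℕ → S) : Prop :=
  c 0 = 0 ∧ c n = 1 ∧ (∀ i ≤ n, IsIdempotentElem (c i) ∧ CentralIn Set.univ (c i)) ∧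
    (∀ i < n, NatLe (c i) (c (i + 1))) ∧
    ∀ i < n, Fef (c i) (c (i + 1)) ⊆ ZIn (Fef 0 (c (i + 1)))

/-- A `G`-solvable series: a chain of central idempotents from `0` to `1` with
each `F_{eᵢ,eᵢ₊₁}` commutative. -/
def GSolvableSeries {S : Type*} [Monoid S] [Zero S] (n : ℕ) (c : ℕ → S) : Prop :=
  c 0 = 0 ∧ c n = 1 ∧ (∀ i ≤ n, IsIdempotentElem (c i) ∧ CentralIn Set.univ (c i)) ∧
    (∀ i < n, NatLe (c i) (c (i + 1))) ∧
    ∀ i < n, ∀ x ∈ Fef (c i) (c (i + 1)), ∀ y ∈ Fef (c i) (c (i + 1)), x * y = y * x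

/-- `S` is `G`-nilpotent. -/
def GNilpotent (S : Type*) [Monoid S] [Zero S] : Prop :=
  ∃ (n : ℕ) (c : ℕ → S), GNilpotentSeries n c

/-- `S` is `G`-solvable. -/
def GSolvable (S : Type*) [Monoid S] [Zero S] : Prop :=
  ∃ (n : ℕ) (c : ℕ → S), GSolvableSeries n c

/-- Two idempotent series are isomorphic: same length, and a one-to-one correspondence
between their factors under which corresponding factors are isomorphic. -/
def SeriesIso {S : Type*} [Monoid S] (n : ℕ) (c : ℕ → S) (n' : ℕ) (d : ℕ → S) : Prop :=
  n = n' ∧ ∃ σ : ℕ → ℕ, Set.BijOn σ {i | i < n} {i | i < n'} ∧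
    ∀ i < n, SubIso (Fef (c i) (c (i + 1))) (Fef (d (σ i)) (d (σ i + 1)))

/-- A composition series (for a kind `P` of series): it has no repeated terms, and any
refinement of it (of the same kind) only repeats its terms. -/
def IsCompositionOf {S : Type*} (P : ℕ → (ℕ → S) → Prop) (n : ℕ) (c : ℕ → S) : Prop :=
  P n c ∧ (∀ i ≤ n, ∀ j ≤ n, c i = c j → i = j) ∧
    ∀ (m : ℕ) (d : ℕ → S), P m d → (∀ i ≤ n, ∃ j ≤ m, d j = c i) →
      ∀ j ≤ m, ∃ i ≤ n, d j = c i

/-!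
In a factorizable inverse monoid an idempotent `e` is central iff it commutes with every unit `u`,
since idempotents commute with one another. This means `u⁻¹ * e * u = e`, and as `u⁻¹ * e * u` is
again idempotent, injectivity of `θ` turns it into `u⁻¹(eθ)u = eθ`.
-/

namespace InverseMonoid

variable {S : Type*} [InverseMonoid S] {e f : S}

theorem inv_inv (a : S) : a⁻¹⁻¹ = a :=
  (inv_unique a⁻¹ a (inv_mul_inv a) (mul_inv_mul a)).symm

theorem inv_eq_self_of_isIdempotentElem (he : IsIdempotentElem e) : e⁻¹ = e :=
  have mul_self_mul_self : e * e * e = e := by rw [he.eq, he.eq]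
  (inv_unique e e mul_self_mul_self mul_self_mul_self).symm

theorem mul_inv_mul_of_isIdempotentElem (he : IsIdempotentElem e) (hf : IsIdempotentElem f) :
    f * (e * f)⁻¹ * e = (e * f)⁻¹ := by
  apply inv_unique
  · calc e * f * (f * (e * f)⁻¹ * e) * (e * f)
        = e * (f * f) * (e * f)⁻¹ * (e * e * f) := by simp only [mul_assoc]
      _ = e * f := by rw [he.eq, hf.eq, mul_inv_mul]
  · calc f * (e * f)⁻¹ * e * (e * f) * (f * (e * f)⁻¹ * e)
        = f * ((e * f)⁻¹ * (e * e * (f * f)) * (e * f)⁻¹) * e := by simp only [mul_assoc]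
      _ = f * (e * f)⁻¹ * e := by rw [he.eq, hf.eq, inv_mul_inv]

theorem isIdempotentElem_mul (he : IsIdempotentElem e) (hf : IsIdempotentElem f) :
    IsIdempotentElem (e * f) := by
  have inv_eq := mul_inv_mul_of_isIdempotentElem he hf
  have inv_idem : IsIdempotentElem (e * f)⁻¹ :=
    calc (e * f)⁻¹ * (e * f)⁻¹
        = f * (e * f)⁻¹ * e * (f * (e * f)⁻¹ * e) := by rw [inv_eq]
      _ = f * ((e * f)⁻¹ * (e * f) * (e * f)⁻¹) * e := by simp only [mul_assoc]
      _ = (e * f)⁻¹ := by rw [inv_mul_inv, inv_eq]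
  rwa [← inv_eq_self_of_isIdempotentElem inv_idem, inv_inv] at inv_idem

theorem commute_of_isIdempotentElem (he : IsIdempotentElem e) (hf : IsIdempotentElem f) :
    Commute e f := by
  have mul_swap_mul {a b : S} (ha : IsIdempotentElem a) (hb : IsIdempotentElem b) :
      a * b * (b * a) * (a * b) = a * b :=
    calc a * b * (b * a) * (a * b) = a * (b * b) * (a * a * b) := by simp only [mul_assoc]
      _ = a * b := by rw [ha.eq, hb.eq, (isIdempotentElem_mul ha hb).eq]
  calc e * f = (e * f)⁻¹ :=
        (inv_eq_self_of_isIdempotentElem (isIdempotentElem_mul he hf)).symm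
    _ = f * e := (inv_unique _ _ (mul_swap_mul he hf) (mul_swap_mul hf he)).symm

end InverseMonoid

section Monoid

variable {S : Type*} [Monoid S] {e : S}

theorem isIdempotentElem_units_inv_mul_mul (he : IsIdempotentElem e) (u : Sˣ) :
    IsIdempotentElem (↑u⁻¹ * e * ↑u) :=
  calc ↑u⁻¹ * e * ↑u * (↑u⁻¹ * e * ↑u) = ↑u⁻¹ * (e * e) * ↑u := by
        simp only [mul_assoc, Units.mul_inv_cancel_left]
    _ = ↑u⁻¹ * e * ↑u := by rw [he.eq]

theorem mem_natconn {x : Sˣ} : x ∈ natconn e ↔ e * ↑x = e := Iff.rfl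

theorem mem_natconn_units_inv_mul_mul {u x : Sˣ} :
    x ∈ natconn (↑u⁻¹ * e * ↑u) ↔ u * x * u⁻¹ ∈ natconn e := by
  rw [mem_natconn, mem_natconn]
  calc ↑u⁻¹ * e * ↑u * ↑x = ↑u⁻¹ * e * ↑u
      ↔ ↑u⁻¹ * (e * (↑u * ↑x)) = ↑u⁻¹ * (e * ↑u) := by simp only [mul_assoc]
    _ ↔ e * (↑u * ↑x) = e * ↑u := Units.mul_right_inj u⁻¹
    _ ↔ e * ↑(u * x * u⁻¹) = e := by
      rw [Units.val_mul, Units.val_mul, ← mul_assoc e (↑u * ↑x), Units.mul_inv_eq_iff_eq_mul]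

open scoped Pointwise in
theorem natconn_units_inv_mul_mul (u : Sˣ) :
    natconn (↑u⁻¹ * e * ↑u) = MulAut.conj u⁻¹ • natconn e := by
  ext x
  rw [mem_natconn_units_inv_mul_mul, map_inv, Subgroup.mem_inv_pointwise_smul_iff,
    MulAut.smul_def, MulAut.conj_apply]

theorem natconn_normal_of_forall_commute (h : ∀ u : Sˣ, Commute e ↑u) : (natconn e).Normal where
  conj_mem x hx u := by
    rwa [← mem_natconn_units_inv_mul_mul, Units.commute_iff_inv_mul_cancel.mp (h u).symm]

theorem natconn_normal_iff_forall_commute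
    (hinj : Set.InjOn natconn {a : S | IsIdempotentElem a}) (he : IsIdempotentElem e) :
    (natconn e).Normal ↔ ∀ u : Sˣ, Commute e ↑u := by
  refine ⟨fun hN u => ?_, natconn_normal_of_forall_commute⟩
  rw [Commute.symm_iff, Units.commute_iff_inv_mul_cancel]
  refine hinj (isIdempotentElem_units_inv_mul_mul he u) he ?_
  rw [natconn_units_inv_mul_mul, Subgroup.Normal.conj_smul_eq_self]

theorem Factorizable.centralIn_univ_iff (hS : Factorizable S)
    (hidem : ∀ f : S, IsIdempotentElem f → Commute e f) :
    CentralIn Set.univ e ↔ ∀ u : Sˣ, Commute e ↑u := by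
  refine ⟨fun hc u => hc.2 u trivial, fun hunits => ⟨trivial, fun s _ => ?_⟩⟩
  obtain ⟨f, _, hf, ⟨u, rfl⟩, rfl⟩ := hS s
  exact (hidem f hf).mul_right (hunits u)

end Monoid

/-- For the natural connection `θ` of an inverse monoid:
`(g⁻¹eg)θ = g⁻¹(eθ)g` for every idempotent `e` and unit `g`; moreover if `S` is
factorizable and `θ` is injective (on idempotents), then an idempotent `e` is central
in `S` iff `eθ` is a normal subgroup of the group of units. -/
theorem stmt_1 {S : Type*} [InverseMonoid S] (e : S) (he : IsIdempotentElem e) :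
    (∀ u x : Sˣ, x ∈ natconn ((↑u⁻¹ : S) * e * (↑u : S)) ↔ u * x * u⁻¹ ∈ natconn e) ∧
    (Factorizable S →
      (∀ a b : S, IsIdempotentElem a → IsIdempotentElem b → natconn a = natconn b → a = b) →
      (CentralIn Set.univ e ↔ (natconn e).Normal)) := by
  refine ⟨fun _ _ => mem_natconn_units_inv_mul_mul, fun hS hinj => ?_⟩
  have hinjOn : Set.InjOn natconn {a : S | IsIdempotentElem a} :=
    fun a ha b hb => hinj a b ha hb
  have hidem (f : S) (hf : IsIdempotentElem f) : Commute e f :=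
    InverseMonoid.commute_of_isIdempotentElem he hf
  rw [hS.centralIn_univ_iff hidem, natconn_normal_iff_forall_commute hinjOn he]
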